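/- Let n ≥ 1 and d ≥ 1 be integers, let J be the ideal of ℤ[x,y] generated by x^n − 1 and (y − x − 1)·f_d(x,y), and let R = ℤ[x,y]/J. Then for every integer e with 0 ≤ e ≤ d−1, the images satisfy f_{e+1}(x,y) · f_d(x,y) ≡ (Σ_{i=0}^{e} x^i) · f_d(x,y) (mod J). -/

import Mathlib

open MvPolynomial

/-- The generalized Fibonacci polynomials in `ℤ[x,y]` (with `x = X 0`, `y = X 1`):
`f 1 = 1`, `f 2 = y`, and `f i = y * f (i-1) - x * f (i-2)` for `i > 2`. -/
noncomputable def genFib : ℕ → MvPolynomial (Fin 2) ℤ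
  | 0 => 0
  | 1 => 1
  | (m + 2) => X 1 * genFib (m + 1) - X 0 * genFib m

/- This is the recurrence defining `genFib`, specialised to `y = x + 1`. -/
theorem geom_sum_add_two_add {R : Type*} [Semiring R] (x : R) (m : ℕ) :
    ∑ i ∈ Finset.range (m + 2), x ^ i + x * ∑ i ∈ Finset.range m, x ^ i =
      (x + 1) * ∑ i ∈ Finset.range (m + 1), x ^ i := by
  calc
    _ = x * ∑ i ∈ Finset.range (m + 1), x ^ i + (x * ∑ i ∈ Finset.range m, x ^ i + 1) := by
      rw [geom_sum_succ, add_assoc, add_comm 1]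
    _ = (x + 1) * ∑ i ∈ Finset.range (m + 1), x ^ i := by
      rw [← geom_sum_succ, add_one_mul]

theorem dvd_genFib_sub_geom_sum (m : ℕ) :
    (X 1 - X 0 - 1 : MvPolynomial (Fin 2) ℤ) ∣ genFib m - ∑ i ∈ Finset.range m, X 0 ^ i := by
  induction m using Nat.twoStepInduction with
  | zero => simp [genFib]
  | one => simp [genFib]
  | more m ih ih' =>
    have error_recurrence :
        genFib (m + 2) - ∑ i ∈ Finset.range (m + 2), X 0 ^ i =
          X 1 * (genFib (m + 1) - ∑ i ∈ Finset.range (m + 1), X 0 ^ i) -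
            X 0 * (genFib m - ∑ i ∈ Finset.range m, X 0 ^ i) +
            (X 1 - X 0 - 1) * ∑ i ∈ Finset.range (m + 1), X 0 ^ i := by
      rw [genFib]
      linear_combination -geom_sum_add_two_add (X 0 : MvPolynomial (Fin 2) ℤ) m
    rw [error_recurrence]
    exact ((ih'.mul_left _).sub (ih.mul_left _)).add (dvd_mul_right _ _)

theorem stmt14_general {J : Ideal (MvPolynomial (Fin 2) ℤ)} {p : MvPolynomial (Fin 2) ℤ}
    (hp : (X 1 - X 0 - 1) * p ∈ J) (m : ℕ) :
    Ideal.Quotient.mk J (genFib m * p) =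
      Ideal.Quotient.mk J ((∑ i ∈ Finset.range m, X 0 ^ i) * p) := by
  rw [Ideal.Quotient.eq, ← sub_mul]
  exact J.mem_of_dvd (mul_dvd_mul_right (dvd_genFib_sub_geom_sum m) p) hp

/-- In the Green ring `R = ℤ[x,y]/J`: for `0 ≤ e ≤ d-1`,
`f_{e+1} · f_d ≡ (Σ_{i=0}^{e} x^i) · f_d (mod J)`. -/
theorem stmt14 (n d : ℕ) (hn : 1 ≤ n) (hd : 1 ≤ d)
    (J : Ideal (MvPolynomial (Fin 2) ℤ))
    (hJ : J = Ideal.span {X 0 ^ n - 1, (X 1 - X 0 - 1) * genFib d})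
    (e : ℕ) (he : e + 1 ≤ d) :
    Ideal.Quotient.mk J (genFib (e + 1) * genFib d) =
      Ideal.Quotient.mk J ((∑ i ∈ Finset.range (e + 1), X 0 ^ i) * genFib d) := by
  subst hJ
  exact stmt14_general (Ideal.subset_span (by simp)) (e + 1)
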